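/- Fix an integer ℓ ≥ 0 and δ ∈ ℝ. There exist a constant C > 0 and an integer N₀ such that for every N ≥ N₀ and every choice of a unit eigenvector u_N of H(δ)H(δ)ᵀ corresponding to its largest eigenvalue: |r_{N−1−ℓ}(N) − δ·G(a,ξ)·(C₁(ℓ)·cos((N−1)ξ + φ) + C₂(ℓ)·sin((N−1)ξ + φ))| ≤ C·a^{−L(N)}. -/

import Mathlib

open Filter Matrix

/-- Hankelization (diagonal averaging): the `j`-th value is the average of the
entries `Y i k` with `i + k = j`. -/
noncomputable def hankelize {L K : ℕ} (Y : Matrix (Fin L) (Fin K) ℝ) (j : ℕ) : ℝ :=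
  (∑ i : Fin L, ∑ k : Fin K, if (i : ℕ) + (k : ℕ) = j then Y i k else 0) /
  (∑ i : Fin L, ∑ k : Fin K, if (i : ℕ) + (k : ℕ) = j then (1 : ℝ) else 0)

/-- The `L × K` Hankel (trajectory) matrix of a series `x`. -/
noncomputable def hankelOf (x : ℕ → ℝ) (L K : ℕ) : Matrix (Fin L) (Fin K) ℝ :=
  Matrix.of fun i k => x ((i : ℕ) + (k : ℕ))

/-- Squared Euclidean norm of a vector. -/
noncomputable def normSq {M : ℕ} (w : Fin M → ℝ) : ℝ := ∑ i, w i ^ 2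

/-- `u` is a unit eigenvector of `A` corresponding to its largest eigenvalue. -/
def IsTopEigenvector {L : ℕ} (A : Matrix (Fin L) (Fin L) ℝ) (u : Fin L → ℝ) : Prop :=
  normSq u = 1 ∧ ∃ μ : ℝ, A.mulVec u = μ • u ∧
    ∀ (ν : ℝ) (v : Fin L → ℝ), v ≠ 0 → A.mulVec v = ν • v → ν ≤ μ

/-- The exponential signal `x_n = a^n`. -/
noncomputable def expSignal (a : ℝ) : ℕ → ℝ := fun n => a ^ n

/-- The harmonic noise `e_n = cos (ξ n + φ)`. -/
noncomputable def cosNoise (ξ φ : ℝ) : ℕ → ℝ := fun n => Real.cos (ξ * (n : ℝ) + φ)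

/-- The vector `W_M = (1, a, …, a^{M-1})ᵀ`. -/
noncomputable def Wvec (a : ℝ) (M : ℕ) : Fin M → ℝ := fun i => a ^ (i : ℕ)

/-- `ρ_j = (𝒮(P₀ E Hᵀ S₀ H))_j + (𝒮(P₀⊥ E))_j`. -/
noncomputable def rho (a ξ φ : ℝ) (L K : ℕ) (j : ℕ) : ℝ :=
  let H := hankelOf (expSignal a) L K
  let E := hankelOf (cosNoise ξ φ) L K
  let P0perp : Matrix (Fin L) (Fin L) ℝ :=
    (normSq (Wvec a L))⁻¹ • Matrix.vecMulVec (Wvec a L) (Wvec a L)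
  let P0 : Matrix (Fin L) (Fin L) ℝ := 1 - P0perp
  let S0 : Matrix (Fin L) (Fin L) ℝ :=
    ((normSq (Wvec a L)) ^ 2 * normSq (Wvec a K))⁻¹ • Matrix.vecMulVec (Wvec a L) (Wvec a L)
  hankelize (P0 * E * Hᵀ * S0 * H) j + hankelize (P0perp * E) j

/-- The matrix `H(δ)H(δ)ᵀ` for the perturbed series `a^n + δ cos(ξ n + φ)`. -/
noncomputable def HdeltaSq (a ξ φ δ : ℝ) (L K : ℕ) : Matrix (Fin L) (Fin L) ℝ :=
  let Hδ := hankelOf (expSignal a) L K + δ • hankelOf (cosNoise ξ φ) L K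
  Hδ * Hδᵀ

/-- The SSA reconstruction error `r_j = (𝒮(u uᵀ H(δ)))_j - a^j`. -/
noncomputable def recErr (a ξ φ δ : ℝ) (L K : ℕ) (u : Fin L → ℝ) (j : ℕ) : ℝ :=
  hankelize (Matrix.vecMulVec u u *
    (hankelOf (expSignal a) L K + δ • hankelOf (cosNoise ξ φ) L K)) j - a ^ j

/-- `G(a,ξ) = (a²-1)/(a(a²+1-2a cos ξ))`. -/
noncomputable def Gfun (a ξ : ℝ) : ℝ := (a ^ 2 - 1) / (a * (a ^ 2 + 1 - 2 * a * Real.cos ξ))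

/-- The coefficient `C₁(ℓ)`. -/
noncomputable def C1 (a ξ : ℝ) (ℓ : ℕ) : ℝ :=
  (2 / (1 + (ℓ : ℝ))) * (a * Real.cos ((ℓ : ℝ) * ξ) - a ^ (-(ℓ : ℤ)) * Real.cos ξ)
  - (a ^ 2 + 1 - 2 * a * Real.cos ξ - 2 * Real.sin ξ ^ 2) * Gfun a ξ * a ^ (-(ℓ : ℤ))

/-- The coefficient `C₂(ℓ)`. -/
noncomputable def C2 (a ξ : ℝ) (ℓ : ℕ) : ℝ :=
  (2 / (1 + (ℓ : ℝ))) * (a * Real.sin ((ℓ : ℝ) * ξ) + a ^ (-(ℓ : ℤ)) * Real.sin ξ)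
  - 2 * Real.sin ξ * (a - Real.cos ξ) * Gfun a ξ * a ^ (-(ℓ : ℤ))

/-- `D(ℓ) = G(a,ξ)·√(C₁(ℓ)² + C₂(ℓ)²)`. -/
noncomputable def Dfun (a ξ : ℝ) (ℓ : ℕ) : ℝ :=
  Gfun a ξ * Real.sqrt (C1 a ξ ℓ ^ 2 + C2 a ξ ℓ ^ 2)


section Abstract
open scoped RealInnerProductSpace InnerProductSpace

theorem abs_inner_le_of {U : Type*} [NormedAddCommGroup U] [InnerProductSpace ℝ U]
    (e x : U) (he : ‖e‖ ≤ 1) : |⟪e, x⟫_ℝ| ≤ ‖x‖ :=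
  (abs_real_inner_le_norm e x).trans (by nlinarith [norm_nonneg x])

theorem norm_perp_le {U : Type*} [NormedAddCommGroup U] [InnerProductSpace ℝ U]
    (w x : U) (hw : ‖w‖ = 1) : ‖x - ⟪w, x⟫_ℝ • w‖ ≤ 2 * ‖x‖ := by
  have h1 := norm_sub_le x (⟪w, x⟫_ℝ • w)
  rw [norm_smul, hw, mul_one, Real.norm_eq_abs] at h1
  have h2 := abs_inner_le_of w x hw.le
  linarith

set_option maxHeartbeats 2000000 in
theorem abstract_pert {U V : Type*} [NormedAddCommGroup U] [InnerProductSpace ℝ U]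
    [NormedAddCommGroup V] [InnerProductSpace ℝ V]
    (F : V →ₗ[ℝ] U) (F' : U →ₗ[ℝ] V) (hadj : ∀ x y, ⟪y, F x⟫_ℝ = ⟪F' y, x⟫_ℝ)
    (B s μ : ℝ) (hB : 0 ≤ B) (hs : 0 < s) (hsB : 4 * B ≤ s)
    (hF : ∀ x, ‖F x‖ ≤ B * ‖x‖) (hF' : ∀ x, ‖F' x‖ ≤ B * ‖x‖)
    (w u : U) (z g : V) (hw : ‖w‖ = 1) (hz : ‖z‖ = 1) (hu : ‖u‖ = 1)
    (hg : g = (s * ⟪w, u⟫_ℝ) • z + F' u)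
    (hμu : μ • u = (s * ⟪z, g⟫_ℝ) • w + F g)
    (hμ : ‖s • z + F' w‖ ^ 2 ≤ μ)
    (e : U) (f : V) (he : ‖e‖ ≤ 1) (hf : ‖f‖ ≤ 1) :
    |⟪e, u⟫_ℝ * ⟪f, g⟫_ℝ - s * ⟪e, w⟫_ℝ * ⟪f, z⟫_ℝ -
      (⟪e, F z⟫_ℝ * ⟪f, z⟫_ℝ + ⟪e, w⟫_ℝ * ⟪f, F' w⟫_ℝ
        - ⟪w, F z⟫_ℝ * ⟪e, w⟫_ℝ * ⟪f, z⟫_ℝ)| ≤ 100 * B ^ 2 / s := by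
  set c := ⟪w, u⟫_ℝ with hc
  have hc1 : |c| ≤ 1 := by
    have := abs_inner_le_of w u hw.le
    rwa [hu] at this
  have hww : ⟪w, w⟫_ℝ = 1 := by rw [real_inner_self_eq_norm_sq, hw]; norm_num
  have huu : ⟪u, u⟫_ℝ = 1 := by rw [real_inner_self_eq_norm_sq, hu]; norm_num
  -- μ = ‖g‖²
  have hμg : μ = ‖g‖ ^ 2 := by
    have h1 : ⟪u, μ • u⟫_ℝ = μ := by rw [real_inner_smul_right, huu, mul_one]
    have h2 : ⟪g, g⟫_ℝ = s * c * ⟪z, g⟫_ℝ + ⟪F' u, g⟫_ℝ := by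
      conv_lhs => rw [show ⟪g, g⟫_ℝ = ⟪(s * c) • z + F' u, g⟫_ℝ by rw [← hg]]
      rw [inner_add_left, real_inner_smul_left]
    rw [← real_inner_self_eq_norm_sq, h2, ← h1, hμu, inner_add_right, real_inner_smul_right,
      hadj]
    have h3 : ⟪u, w⟫_ℝ = c := real_inner_comm w u
    rw [h3]
    ring
  set σ := ‖g‖ with hσ
  have hσs : s - B ≤ σ := by
    have h1 : s - B ≤ ‖s • z + F' w‖ := by
      have h2 := norm_sub_le (s • z + F' w) (F' w)
      rw [add_sub_cancel_right, norm_smul, hz, Real.norm_eq_abs, abs_of_pos hs] at h2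
      have := hF' w
      rw [hw] at this
      linarith
    have h2 : ‖s • z + F' w‖ ≤ σ := by
      rw [hμg] at hμ
      exact (pow_le_pow_iff_left₀ (norm_nonneg _) (norm_nonneg _) (by norm_num)).1 hμ
    linarith
  have hσ34 : 3 / 4 * s ≤ σ := by linarith
  have hσpos : 0 < σ := by linarith
  have hμpos : 0 < μ := by rw [hμg]; positivity
  -- |σ - s|c|| ≤ B
  have hFu : ‖F' u‖ ≤ B := by simpa [hu] using hF' u
  have hFw : ‖F' w‖ ≤ B := by simpa [hw] using hF' w
  have hFz : ‖F z‖ ≤ B := by simpa [hz] using hF z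
  have hσc : |σ - s * (|c|)| ≤ B := by
    have h1 := abs_norm_sub_norm_le g ((s * c) • z)
    rw [norm_smul, hz, Real.norm_eq_abs, abs_mul, abs_of_pos hs, mul_one] at h1
    have h2 : g - (s * c) • z = F' u := by rw [hg]; abel
    rw [h2] at h1
    exact h1.trans hFu
  have hσle : σ ≤ 5 / 4 * s := by
    have := (abs_le.1 hσc).2
    nlinarith
  -- p
  set p := u - c • w with hp
  have hwp : ⟪w, p⟫_ℝ = 0 := by
    rw [hp, inner_sub_right, real_inner_smul_right, hww, ← hc]; ring
  have hup : u = c • w + p := by rw [hp]; abel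
  have hcp : c ^ 2 = 1 - ‖p‖ ^ 2 := by
    have : ⟪p, p⟫_ℝ = 1 - c ^ 2 := by
      rw [hp, inner_sub_left, inner_sub_right, inner_sub_right]
      simp only [real_inner_smul_left, real_inner_smul_right, hww, huu]
      rw [real_inner_comm w u, ← hc]; ring
    rw [real_inner_self_eq_norm_sq] at this
    linarith
  have hμc : μ * c = s * ⟪z, g⟫_ℝ + ⟪w, F g⟫_ℝ := by
    have : ⟪w, μ • u⟫_ℝ = μ * c := by rw [real_inner_smul_right]
    rw [← this, hμu, inner_add_right, real_inner_smul_right, hww, mul_one]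
  have hμp : μ • p = F g - ⟪w, F g⟫_ℝ • w := by
    rw [hp, smul_sub, hμu, smul_smul, hμc, add_smul]
    abel
  have hpn : ‖p‖ ≤ 8 / 3 * (B / s) := by
    have h1 : μ * ‖p‖ ≤ 2 * (B * σ) := by
      have h2 := norm_perp_le w (F g) hw
      rw [← hμp, norm_smul, Real.norm_eq_abs, abs_of_pos hμpos] at h2
      have := hF g
      linarith
    rw [hμg] at h1
    have h3 : σ * ‖p‖ ≤ 2 * B := by
      have : σ * (σ * ‖p‖) ≤ σ * (2 * B) := by nlinarith
      exact le_of_mul_le_mul_left this hσpos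
    have h4 : s * ‖p‖ ≤ 8 / 3 * B := by nlinarith [norm_nonneg p]
    rw [← mul_div_assoc, le_div_iff₀ hs]
    linarith
  have hBs : 0 ≤ B / s := by positivity
  have hBs4 : B / s ≤ 1 / 4 := by rw [div_le_iff₀ hs]; linarith
  have hBsB : s * (B / s) = B := by field_simp
  set t := B / s with ht
  have hp0 := norm_nonneg p
  -- goal rhs
  have hrhs : 100 * B ^ 2 / s = 100 * (B * t) := by rw [ht]; ring
  rw [hrhs]
  -- Q = (Fz)^⊥
  set q := F z - ⟪w, F z⟫_ℝ • w with hq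
  have hqn : ‖q‖ ≤ 2 * B := (norm_perp_le w (F z) hw).trans (by linarith)
  set r := F (F' u) - ⟪w, F (F' u)⟫_ℝ • w with hr
  have hrn : ‖r‖ ≤ 2 * B ^ 2 := by
    have h1 := norm_perp_le w (F (F' u)) hw
    have h2 := hF (F' u)
    nlinarith
  have hFg : F g = (s * c) • F z + F (F' u) := by
    conv_lhs => rw [hg]
    rw [map_add, map_smul]
  have hμp2 : μ • p = (s * c) • q + r := by
    rw [hμp, hFg, inner_add_right, real_inner_smul_right, hq, hr]
    module
  -- fourth
  have h4 : ‖(s * c) • p - q‖ ≤ 20 * (B * t) := by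
    have h1 : μ • ((s * c) • p - q) = (s ^ 2 * c ^ 2 - μ) • q + (s * c) • r := by
      rw [smul_sub, smul_comm, hμp2]
      module
    have h2 : |s ^ 2 * c ^ 2 - μ| ≤ B * (9 / 4 * s) := by
      have : s ^ 2 * c ^ 2 - μ = - ((σ - s * |c|) * (σ + s * |c|)) := by
        rw [hμg, ← sq_abs c]; ring
      rw [this, abs_neg, abs_mul]
      have h5 : |σ + s * (|c|)| ≤ 9 / 4 * s := by
        rw [abs_of_nonneg (by positivity)]
        nlinarith
      exact mul_le_mul hσc h5 (abs_nonneg _) hB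
    have h3 : μ * ‖(s * c) • p - q‖ ≤ (B * (9 / 4 * s)) * (2 * B) + s * (2 * B ^ 2) := by
      have h5 : μ * ‖(s * c) • p - q‖ = ‖μ • ((s * c) • p - q)‖ := by
        rw [norm_smul, Real.norm_eq_abs, abs_of_pos hμpos]
      rw [h5, h1]
      refine (norm_add_le _ _).trans ?_
      rw [norm_smul, norm_smul, Real.norm_eq_abs, Real.norm_eq_abs, abs_mul, abs_of_pos hs]
      refine add_le_add (mul_le_mul h2 hqn (norm_nonneg _) (by positivity)) ?_
      refine mul_le_mul ?_ hrn (norm_nonneg _) hs.le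
      nlinarith
    have h6 : 9 / 16 * s ^ 2 ≤ μ := by rw [hμg]; nlinarith
    have h7 : 9 / 16 * s ^ 2 * ‖(s * c) • p - q‖ ≤ 13 / 2 * s * B ^ 2 := by
      have := mul_le_mul_of_nonneg_right h6 (norm_nonneg ((s * c) • p - q))
      nlinarith
    have h8 : s ^ 2 * ‖(s * c) • p - q‖ ≤ s ^ 2 * (20 * (B * t)) := by
      have : s ^ 2 * (20 * (B * t)) = 20 * s * B * (s * t) := by ring
      rw [this, hBsB]
      nlinarith [mul_nonneg hs.le (sq_nonneg B)]
    exact le_of_mul_le_mul_left h8 (by positivity)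
  -- third
  have h3 : ‖c • F' u - F' w‖ ≤ 8 * (B * t) := by
    have h1 : c • F' u - F' w = (-(‖p‖ ^ 2)) • F' w + c • F' p := by
      have : -(‖p‖ ^ 2) = c * c - 1 := by nlinarith
      rw [this]
      conv_lhs => rw [hup]
      rw [map_add, map_smul]
      module
    rw [h1]
    refine (norm_add_le _ _).trans ?_
    rw [norm_smul, norm_smul, Real.norm_eq_abs, Real.norm_eq_abs, abs_neg,
      abs_of_nonneg (sq_nonneg ‖p‖)]
    have h5 : ‖F' p‖ ≤ B * (8 / 3 * t) := (hF' p).trans (by gcongr)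
    have h6 : |c| * ‖F' p‖ ≤ 1 * (B * (8 / 3 * t)) := by gcongr
    have h7 : ‖p‖ ^ 2 * ‖F' w‖ ≤ (8 / 3 * t) ^ 2 * B := by gcongr
    have h8 : (8 / 3 * t) ^ 2 * B ≤ 16 / 9 * (B * t) := by
      have : 0 ≤ B * t * (1 / 4 - t) := by
        apply mul_nonneg; positivity; linarith
      nlinarith
    have : 0 ≤ B * t := by positivity
    linarith
  have key : ⟪e, u⟫_ℝ * ⟪f, g⟫_ℝ - s * ⟪e, w⟫_ℝ * ⟪f, z⟫_ℝ -
      (⟪e, F z⟫_ℝ * ⟪f, z⟫_ℝ + ⟪e, w⟫_ℝ * ⟪f, F' w⟫_ℝ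
        - ⟪w, F z⟫_ℝ * ⟪e, w⟫_ℝ * ⟪f, z⟫_ℝ)
      = - (s * ‖p‖ ^ 2) * (⟪e, w⟫_ℝ * ⟪f, z⟫_ℝ) + ⟪e, p⟫_ℝ * ⟪f, F' u⟫_ℝ
        + ⟪e, w⟫_ℝ * ⟪f, c • F' u - F' w⟫_ℝ + ⟪e, (s * c) • p - q⟫_ℝ * ⟪f, z⟫_ℝ := by
    have e1 : ⟪e, u⟫_ℝ = c * ⟪e, w⟫_ℝ + ⟪e, p⟫_ℝ := by
      conv_lhs => rw [hup]
      rw [inner_add_right, real_inner_smul_right]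
    have e2 : ⟪f, g⟫_ℝ = s * c * ⟪f, z⟫_ℝ + ⟪f, F' u⟫_ℝ := by
      conv_lhs => rw [hg]
      rw [inner_add_right, real_inner_smul_right]
    have e3 : ‖p‖ ^ 2 = 1 - c ^ 2 := by linarith
    have e4 : ⟪e, q⟫_ℝ = ⟪e, F z⟫_ℝ - ⟪w, F z⟫_ℝ * ⟪e, w⟫_ℝ := by
      rw [hq, inner_sub_right, real_inner_smul_right]
    have e5 : ⟪e, (s * c) • p - q⟫_ℝ = s * c * ⟪e, p⟫_ℝ - ⟪e, q⟫_ℝ := by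
      rw [inner_sub_right, real_inner_smul_right]
    have e6 : ⟪f, c • F' u - F' w⟫_ℝ = c * ⟪f, F' u⟫_ℝ - ⟪f, F' w⟫_ℝ := by
      rw [inner_sub_right, real_inner_smul_right]
    rw [e5, e6, e4, e1, e2, e3]
    ring
  rw [key]
  have hew : |⟪e, w⟫_ℝ| ≤ 1 := by simpa [hw] using abs_inner_le_of e w he
  have hfz : |⟪f, z⟫_ℝ| ≤ 1 := by simpa [hz] using abs_inner_le_of f z hf
  have hep := (abs_inner_le_of e p he).trans hpn
  have hfu := (abs_inner_le_of f (F' u) hf).trans hFu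
  have hf3 := (abs_inner_le_of f _ hf).trans h3
  have he4 := (abs_inner_le_of e _ he).trans h4
  have b1 : |- (s * ‖p‖ ^ 2) * (⟪e, w⟫_ℝ * ⟪f, z⟫_ℝ)| ≤ (s * (8 / 3 * t) ^ 2) * (1 * 1) := by
    rw [abs_mul, abs_neg, abs_of_nonneg (by positivity : 0 ≤ s * ‖p‖ ^ 2), abs_mul]
    gcongr
  have b2 : |⟪e, p⟫_ℝ * ⟪f, F' u⟫_ℝ| ≤ (8 / 3 * t) * B := by
    rw [abs_mul]; gcongr
  have b3 : |⟪e, w⟫_ℝ * ⟪f, c • F' u - F' w⟫_ℝ| ≤ 1 * (8 * (B * t)) := by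
    rw [abs_mul]; gcongr
  have b4 : |⟪e, (s * c) • p - q⟫_ℝ * ⟪f, z⟫_ℝ| ≤ (20 * (B * t)) * 1 := by
    rw [abs_mul]; gcongr
  have b5 : s * (8 / 3 * t) ^ 2 = 64 / 9 * (B * t) := by
    have : s * (8 / 3 * t) ^ 2 = 64 / 9 * ((s * t) * t) := by ring
    rw [this, hBsB]
  have hBt : 0 ≤ B * t := by positivity
  refine (abs_add_le _ _).trans ?_
  refine (add_le_add_left ((abs_add_le _ _).trans (add_le_add_left (abs_add_le _ _) _)) _).trans ?_
  linarith

end Abstract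

set_option linter.deprecated false

section MatrixPart
open scoped RealInnerProductSpace InnerProductSpace

theorem top_rayleigh {L : ℕ} (A : Matrix (Fin L) (Fin L) ℝ) (hA : A.IsHermitian) (μ : ℝ)
    (hμ : ∀ (ν : ℝ) (v : Fin L → ℝ), v ≠ 0 → A.mulVec v = ν • v → ν ≤ μ) (x : Fin L → ℝ) :
    x ⬝ᵥ (A *ᵥ x) ≤ μ * (x ⬝ᵥ x) := by
  have hB : (μ • (1 : Matrix (Fin L) (Fin L) ℝ) - A).IsHermitian := by
    apply Matrix.IsHermitian.sub _ hA
    ext i j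
    simp [Matrix.one_apply, eq_comm]
  have hps : (μ • (1 : Matrix (Fin L) (Fin L) ℝ) - A).PosSemidef := by
    rw [hB.posSemidef_iff_eigenvalues_nonneg]
    intro j
    have h1 := hB.mulVec_eigenvectorBasis j
    rw [Matrix.sub_mulVec, Matrix.smul_mulVec, Matrix.one_mulVec] at h1
    have h2 := hμ (μ - hB.eigenvalues j) (hB.eigenvectorBasis j).ofLp ?_ ?_
    · simp only [Pi.zero_apply]; linarith
    · intro h
      have h3 := hB.eigenvectorBasis.orthonormal.1 j
      have h4 : hB.eigenvectorBasis j = 0 := by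
        ext i; exact congrFun h i
      rw [h4, norm_zero] at h3
      exact zero_ne_one h3
    · rw [sub_smul, ← h1]; abel
  have h := hps.dotProduct_mulVec_nonneg x
  rw [Matrix.sub_mulVec, Matrix.smul_mulVec, Matrix.one_mulVec, dotProduct_sub,
    dotProduct_smul] at h
  simp only [star_trivial, smul_eq_mul] at h
  linarith

theorem frob_bound {L K : ℕ} (Fm : Matrix (Fin L) (Fin K) ℝ) (B : ℝ) (hB : 0 ≤ B)
    (hF : ∑ i, ∑ k, Fm i k ^ 2 ≤ B ^ 2) (x : EuclideanSpace ℝ (Fin K)) :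
    ‖Matrix.toEuclideanLin Fm x‖ ≤ B * ‖x‖ := by
  refine (pow_le_pow_iff_left₀ (norm_nonneg _) (by positivity) two_ne_zero).1 ?_
  rw [mul_pow, EuclideanSpace.real_norm_sq_eq, EuclideanSpace.real_norm_sq_eq]
  calc ∑ i, (Matrix.toEuclideanLin Fm x) i ^ 2
      ≤ ∑ i, (∑ k, Fm i k ^ 2) * ∑ k, x k ^ 2 := by
        refine Finset.sum_le_sum fun i _ => ?_
        rw [Matrix.ofLp_toEuclideanLin_apply]
        exact Finset.sum_mul_sq_le_sq_mul_sq Finset.univ (fun k => Fm i k) (fun k => x k)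
    _ = (∑ i, ∑ k, Fm i k ^ 2) * ∑ k, x k ^ 2 := by rw [Finset.sum_mul]
    _ ≤ _ := mul_le_mul_of_nonneg_right hF (Finset.sum_nonneg fun _ _ => sq_nonneg _)

theorem norm_toLp_of {L : ℕ} (w : Fin L → ℝ) (hw : w ⬝ᵥ w = 1) :
    ‖(WithLp.toLp 2 w : EuclideanSpace ℝ (Fin L))‖ = 1 := by
  have : ‖(WithLp.toLp 2 w : EuclideanSpace ℝ (Fin L))‖ ^ 2 = 1 := by
    rw [EuclideanSpace.real_norm_sq_eq, ← hw]
    simp [dotProduct, sq]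
  nlinarith [norm_nonneg (WithLp.toLp 2 w : EuclideanSpace ℝ (Fin L))]

theorem mat_pert {L K : ℕ} (w : Fin L → ℝ) (z : Fin K → ℝ) (hw : w ⬝ᵥ w = 1) (hz : z ⬝ᵥ z = 1)
    (Fm : Matrix (Fin L) (Fin K) ℝ) (B s : ℝ) (hB : 0 ≤ B) (hs : 0 < s) (hsB : 4 * B ≤ s)
    (hF : ∑ i, ∑ k, Fm i k ^ 2 ≤ B ^ 2) (M : Matrix (Fin L) (Fin K) ℝ)
    (hM : M = s • Matrix.vecMulVec w z + Fm) (u : Fin L → ℝ) (hu : IsTopEigenvector (M * Mᵀ) u)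
    (i : Fin L) (k : Fin K) :
    |(Matrix.vecMulVec u u * M) i k - s * w i * z k -
      ((Fm *ᵥ z) i * z k + w i * (Fmᵀ *ᵥ w) k - (w ⬝ᵥ (Fm *ᵥ z)) * w i * z k)|
      ≤ 100 * B ^ 2 / s := by
  obtain ⟨hu1, μ, hμu, hμ⟩ := hu
  have huu : u ⬝ᵥ u = 1 := by rw [← hu1]; simp [normSq, dotProduct, sq]
  have hF' : ∑ k, ∑ i, Fmᵀ k i ^ 2 ≤ B ^ 2 := by
    rw [Finset.sum_comm]; exact hF
  have hherm : (M * Mᵀ).IsHermitian := by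
    have := Matrix.isHermitian_mul_conjTranspose_self M
    simpa using this
  have hray := top_rayleigh (M * Mᵀ) hherm μ hμ w
  have hMT : ∀ y : Fin L → ℝ, Mᵀ *ᵥ y = (s * (w ⬝ᵥ y)) • z + Fmᵀ *ᵥ y := by
    intro y
    rw [hM, Matrix.transpose_add, Matrix.transpose_smul, Matrix.add_mulVec, Matrix.smul_mulVec,
      Matrix.transpose_vecMulVec, Matrix.vecMulVec_mulVec]
    ext k
    simp
    ring
  have hMv : ∀ y : Fin K → ℝ, M *ᵥ y = (s * (z ⬝ᵥ y)) • w + Fm *ᵥ y := by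
    intro y
    rw [hM, Matrix.add_mulVec, Matrix.smul_mulVec, Matrix.vecMulVec_mulVec]
    ext k
    simp
    ring
  have inn : ∀ {n : ℕ} (x y : Fin n → ℝ), ⟪(WithLp.toLp 2 x : EuclideanSpace ℝ (Fin n)),
      (WithLp.toLp 2 y : EuclideanSpace ℝ (Fin n))⟫_ℝ = x ⬝ᵥ y := by
    intro n x y
    rw [EuclideanSpace.inner_toLp_toLp, star_trivial, dotProduct_comm]
  set g := Mᵀ *ᵥ u with hg
  have key := abstract_pert (Matrix.toEuclideanLin Fm) (Matrix.toEuclideanLin Fmᵀ)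
    (fun x y => by
      obtain ⟨x, rfl⟩ := WithLp.toLp_surjective 2 x
      obtain ⟨y, rfl⟩ := WithLp.toLp_surjective 2 y
      rw [Matrix.toEuclideanLin_toLp, Matrix.toEuclideanLin_toLp]
      simp only [Matrix.toLin'_apply]
      rw [inn, inn, Matrix.mulVec_transpose, Matrix.dotProduct_mulVec])
    B s μ hB hs hsB (frob_bound Fm B hB hF) (frob_bound Fmᵀ B hB hF')
    (WithLp.toLp 2 w) (WithLp.toLp 2 u) (WithLp.toLp 2 z) (WithLp.toLp 2 g)
    (norm_toLp_of w hw) (norm_toLp_of z hz) (norm_toLp_of u huu)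
    (by
      rw [inn, hg, hMT, Matrix.toEuclideanLin_toLp]; rfl)
    (by
      rw [inn, Matrix.toEuclideanLin_toLp]
      have : μ • u = (s * (z ⬝ᵥ g)) • w + Fm *ᵥ g := by
        rw [← hμu, ← hMv, hg, Matrix.mulVec_mulVec]
      rw [← WithLp.toLp_smul, this]; rfl)
    (by
      have h1 : s • z + Fmᵀ *ᵥ w = Mᵀ *ᵥ w := by rw [hMT, hw, mul_one]
      have h2 : s • (WithLp.toLp 2 z : EuclideanSpace ℝ (Fin K)) +
          Matrix.toEuclideanLin Fmᵀ (WithLp.toLp 2 w) = WithLp.toLp 2 (Mᵀ *ᵥ w) := by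
        rw [← h1, Matrix.toEuclideanLin_toLp]; rfl
      rw [h2, ← real_inner_self_eq_norm_sq, inn]
      rw [hw, mul_one, ← Matrix.mulVec_mulVec, Matrix.dotProduct_mulVec] at hray
      rwa [Matrix.mulVec_transpose] at hray ⊢)
    (WithLp.toLp 2 (Pi.single i 1)) (WithLp.toLp 2 (Pi.single k 1))
    (norm_toLp_of _ (by simp)).le (norm_toLp_of _ (by simp)).le
  rw [Matrix.toEuclideanLin_toLp, Matrix.toEuclideanLin_toLp] at key
  simp only [Matrix.toLin'_apply, inn, single_dotProduct, one_mul] at key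
  have hent : (Matrix.vecMulVec u u * M) i k = u i * g k := by
    rw [Matrix.mul_apply, hg]
    simp only [Matrix.vecMulVec_apply, Matrix.mulVec, dotProduct, Matrix.transpose_apply]
    rw [Finset.mul_sum]
    refine Finset.sum_congr rfl fun j _ => ?_
    ring
  rw [hent]
  exact key

end MatrixPart

section AnalysisPart

/-- squared norm of `W_M` as a range sum -/
noncomputable def nW (a : ℝ) (M : ℕ) : ℝ := ∑ m ∈ Finset.range M, (a ^ m) ^ 2

noncomputable def Dn (a ξ : ℝ) : ℝ := a ^ 2 + 1 - 2 * a * Real.cos ξ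

theorem Dn_pos (a ξ : ℝ) (ha : 1 < a) : 0 < Dn a ξ := by
  unfold Dn
  nlinarith [Real.cos_le_one ξ, sq_nonneg (a - 1), mul_pos (sub_pos.2 ha) (sub_pos.2 ha)]

theorem nW_eq (a : ℝ) (ha : 1 < a) (M : ℕ) : nW a M * (a ^ 2 - 1) = (a ^ M) ^ 2 - 1 := by
  unfold nW
  have h := geom_sum_mul (a ^ 2) M
  have h2 : ∀ m : ℕ, (a ^ m) ^ 2 = (a ^ 2) ^ m := fun m => by rw [← pow_mul, ← pow_mul, mul_comm]
  simp only [h2]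
  exact h

theorem nW_pos (a : ℝ) (ha : 1 < a) (M : ℕ) (hM : 1 ≤ M) : 0 < nW a M := by
  unfold nW
  apply Finset.sum_pos
  · intro i _; positivity
  · exact ⟨0, Finset.mem_range.2 hM⟩

theorem cos_sum (a ξ θ : ℝ) (M : ℕ) :
    Dn a ξ * ∑ m ∈ Finset.range M, a ^ m * Real.cos (ξ * m + θ) =
      a ^ M * (a * Real.cos (ξ * ((M : ℝ) - 1) + θ) - Real.cos (ξ * M + θ))
        - (a * Real.cos (θ - ξ) - Real.cos θ) := by
  induction M with
  | zero =>
    simp only [Finset.range_zero, Finset.sum_empty, pow_zero, Nat.cast_zero]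
    rw [show ξ * (0 - 1) + θ = θ - ξ by ring, show ξ * 0 + θ = θ by ring]; ring
  | succ M ih =>
    rw [Finset.sum_range_succ, mul_add, ih]
    push_cast
    rw [show ξ * ((M : ℝ) + 1 - 1) + θ = ξ * M + θ by ring,
      show ξ * ((M : ℝ) + 1) + θ = (ξ * M + θ) + ξ by ring,
      show ξ * ((M : ℝ) - 1) + θ = (ξ * M + θ) - ξ by ring, Real.cos_add _ ξ, Real.cos_sub _ ξ]
    unfold Dn
    ring

noncomputable def XM (a ξ : ℝ) (M : ℕ) (θ : ℝ) : ℝ :=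
  a ^ M / nW a M * ∑ m ∈ Finset.range M, a ^ m * Real.cos (ξ * m + θ)

noncomputable def kap (a ξ : ℝ) : ℝ := (a ^ 2 - 1) / Dn a ξ

theorem kap_pos (a ξ : ℝ) (ha : 1 < a) : 0 < kap a ξ := by
  unfold kap
  exact div_pos (by nlinarith) (Dn_pos a ξ ha)

theorem abs_h_le (a x y : ℝ) (ha : 1 < a) : |a * Real.cos x - Real.cos y| ≤ a + 1 := by
  have := Real.cos_le_one x
  have := Real.neg_one_le_cos x
  have := Real.cos_le_one y
  have := Real.neg_one_le_cos y
  rw [abs_le]; constructor <;> nlinarith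

theorem lemA (a ξ : ℝ) (ha : 1 < a) (M : ℕ) (hM : 1 ≤ M) (θ : ℝ) :
    |XM a ξ M θ - kap a ξ *
      (a * Real.cos (ξ * ((M : ℝ) - 1) + θ) - Real.cos (ξ * M + θ))| ≤
      (a * (a + 1) ^ 2 / Dn a ξ) * (a⁻¹) ^ M := by
  have hD := Dn_pos a ξ ha
  have hS := cos_sum a ξ θ M
  have hn := nW_eq a ha M
  have hnp := nW_pos a ha M hM
  have hAa : a ≤ a ^ M := by
    calc a = a ^ 1 := (pow_one a).symm
      _ ≤ a ^ M := pow_le_pow_right₀ ha.le hM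
  have b1 := abs_h_le a (ξ * ((M : ℝ) - 1) + θ) (ξ * M + θ) ha
  have b0 := abs_h_le a (θ - ξ) θ ha
  unfold XM kap
  set S := ∑ m ∈ Finset.range M, a ^ m * Real.cos (ξ * m + θ)
  set h1 := a * Real.cos (ξ * ((M : ℝ) - 1) + θ) - Real.cos (ξ * M + θ)
  set h0 := a * Real.cos (θ - ξ) - Real.cos θ
  rw [inv_pow]
  set A := a ^ M
  set D := Dn a ξ
  set n := nW a M
  have ha2 : 0 < a ^ 2 - 1 := by nlinarith
  have hA1 : 0 < A - 1 := by linarith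
  have hA2 : A ^ 2 - 1 ≠ 0 := by nlinarith
  have hSe : S = (A * h1 - h0) / D := by rw [eq_div_iff hD.ne']; linarith
  have hne : n = (A ^ 2 - 1) / (a ^ 2 - 1) := by rw [eq_div_iff ha2.ne']; linarith
  have key : A / n * S - (a ^ 2 - 1) / D * h1 =
      (a ^ 2 - 1) / D * ((h1 - A * h0) / (A ^ 2 - 1)) := by
    rw [hSe, hne]
    field_simp
    ring
  rw [key, abs_mul, abs_of_pos (by positivity : 0 < (a ^ 2 - 1) / D), abs_div,
    abs_of_pos (by nlinarith : 0 < A ^ 2 - 1)]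
  have hnum : |h1 - A * h0| ≤ (a + 1) * (A + 1) := by
    refine (abs_sub _ _).trans ?_
    rw [abs_mul, abs_of_pos (by linarith : 0 < A)]
    nlinarith
  have hq : |h1 - A * h0| / (A ^ 2 - 1) ≤ (a + 1) * a / ((a - 1) * A) := by
    rw [div_le_div_iff₀ (by nlinarith) (by apply mul_pos <;> linarith)]
    have e1 : |h1 - A * h0| * ((a - 1) * A) ≤ ((a + 1) * (A + 1)) * ((a - 1) * A) := by
      apply mul_le_mul_of_nonneg_right hnum
      apply mul_nonneg <;> linarith
    have e2 : (a - 1) * A ≤ a * (A - 1) := by nlinarith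
    have e3 : ((a + 1) * (A + 1)) * ((a - 1) * A) ≤ ((a + 1) * (A + 1)) * (a * (A - 1)) := by
      apply mul_le_mul_of_nonneg_left e2
      apply mul_nonneg <;> linarith
    linarith
  calc (a ^ 2 - 1) / D * (|h1 - A * h0| / (A ^ 2 - 1))
      ≤ (a ^ 2 - 1) / D * ((a + 1) * a / ((a - 1) * A)) := by gcongr
    _ = (a * (a + 1) ^ 2 / D) * A⁻¹ := by
      have : a - 1 ≠ 0 := by linarith
      have : A ≠ 0 := by linarith
      field_simp
      ring

theorem lemA0 (a : ℝ) (ha : 1 < a) (M : ℕ) (hM : 1 ≤ M) :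
    a ^ M / nW a M * ∑ m ∈ Finset.range M, a ^ m ≤ a + 1 := by
  have hn := nW_eq a ha M
  have hnp := nW_pos a ha M hM
  have hg := geom_sum_mul a M
  have hAa : 1 < a ^ M := one_lt_pow₀ ha (by omega)
  set A := a ^ M
  set n := nW a M
  set S := ∑ m ∈ Finset.range M, a ^ m
  rw [div_mul_eq_mul_div, div_le_iff₀ hnp]
  have h1 : 0 < a - 1 := by linarith
  -- (a+1) n (a-1) = A² - 1 ≥ A (A-1) = A S (a-1)
  have : A * S * (a - 1) ≤ (a + 1) * n * (a - 1) := by nlinarith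
  exact le_of_mul_le_mul_right this h1

noncomputable def Qf (a ξ ψ : ℝ) : ℝ :=
  a ^ 2 * Real.cos ψ - 2 * a * Real.cos (ψ + ξ) + Real.cos (ψ + 2 * ξ)

theorem lemB (a ξ φ : ℝ) (ha : 1 < a) (L K : ℕ) (hL : 1 ≤ L) (hLK : L ≤ K) :
    |a ^ L / nW a L * (∑ m ∈ Finset.range L, a ^ m * XM a ξ K (ξ * m + φ)) -
      kap a ξ ^ 2 * Qf a ξ (ξ * ((L : ℝ) + K - 2) + φ)| ≤
      ((a + 1) * (1 + kap a ξ) * (a * (a + 1) ^ 2 / Dn a ξ)) * (a⁻¹) ^ L := by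
  have hK : 1 ≤ K := hL.trans hLK
  set κ := kap a ξ with hκ
  have hκp : 0 < κ := kap_pos a ξ ha
  set c := a * (a + 1) ^ 2 / Dn a ξ with hc
  have hcp : 0 < c := by have := Dn_pos a ξ ha; positivity
  have hnp := nW_pos a ha L hL
  set cL := a ^ L / nW a L with hcL
  have hcLp : 0 < cL := by positivity
  have hb : (a⁻¹) ^ K ≤ (a⁻¹) ^ L :=
    pow_le_pow_of_le_one (by positivity) (inv_le_one_of_one_le₀ ha.le) hLK
  have s1 : |cL * (∑ m ∈ Finset.range L, a ^ m * XM a ξ K (ξ * m + φ)) -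
      κ * (a * XM a ξ L (ξ * ((K : ℝ) - 1) + φ) - XM a ξ L (ξ * K + φ))| ≤
      (a + 1) * (c * (a⁻¹) ^ L) := by
    have e : cL * (∑ m ∈ Finset.range L, a ^ m * XM a ξ K (ξ * m + φ)) -
      κ * (a * XM a ξ L (ξ * ((K : ℝ) - 1) + φ) - XM a ξ L (ξ * K + φ)) =
      cL * ∑ m ∈ Finset.range L, a ^ m * (XM a ξ K (ξ * m + φ) - κ *
        (a * Real.cos (ξ * ((K : ℝ) - 1) + (ξ * m + φ)) - Real.cos (ξ * K + (ξ * m + φ)))) := by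
      unfold XM
      rw [← hcL]
      have e2 : ∀ m : ℕ, a ^ m * (a ^ K / nW a K * ∑ m_1 ∈ Finset.range K, a ^ m_1 * Real.cos (ξ * ↑m_1 + (ξ * ↑m + φ)) - κ *
          (a * Real.cos (ξ * ((K : ℝ) - 1) + (ξ * m + φ)) - Real.cos (ξ * K + (ξ * m + φ)))) =
          a ^ m * (a ^ K / nW a K * ∑ m_1 ∈ Finset.range K, a ^ m_1 * Real.cos (ξ * ↑m_1 + (ξ * ↑m + φ))) - (κ * a * (a ^ m * Real.cos (ξ * m + (ξ * ((K : ℝ) - 1) + φ))) - κ * (a ^ m *  Real.cos (ξ * m + (ξ * K + φ)))) := by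
        intro m
        rw [show ξ * ((K : ℝ) - 1) + (ξ * m + φ) = ξ * m + (ξ * ((K : ℝ) - 1) + φ) by ring,
          show ξ * (K : ℝ) + (ξ * m + φ) = ξ * m + (ξ * (K : ℝ) + φ) by ring]
        ring
      simp only [e2, Finset.sum_sub_distrib, ← Finset.mul_sum]
      ring
    rw [e, abs_mul, abs_of_pos hcLp]
    calc cL * |∑ m ∈ Finset.range L, a ^ m * (XM a ξ K (ξ * m + φ) - κ *
        (a * Real.cos (ξ * ((K : ℝ) - 1) + (ξ * m + φ)) - Real.cos (ξ * K + (ξ * m + φ))))|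
        ≤ cL * ∑ m ∈ Finset.range L, a ^ m * (c * (a⁻¹) ^ L) := by
          refine mul_le_mul_of_nonneg_left ?_ hcLp.le
          refine (Finset.abs_sum_le_sum_abs _ _).trans (Finset.sum_le_sum fun m _ => ?_)
          rw [abs_mul, abs_of_pos (by positivity : 0 < a ^ m)]
          refine mul_le_mul_of_nonneg_left ?_ (by positivity)
          refine (lemA a ξ ha K hK _).trans ?_
          exact mul_le_mul_of_nonneg_left hb hcp.le
      _ = (cL * ∑ m ∈ Finset.range L, a ^ m) * (c * (a⁻¹) ^ L) := by
          rw [← Finset.sum_mul]; ring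
      _ ≤ (a + 1) * (c * (a⁻¹) ^ L) := by
          refine mul_le_mul_of_nonneg_right (lemA0 a ha L hL) (by positivity)
  have s2 := lemA a ξ ha L hL (ξ * ((K : ℝ) - 1) + φ)
  have s3 := lemA a ξ ha L hL (ξ * (K : ℝ) + φ)
  rw [← hκ, ← hc] at s2 s3
  have hQ : Qf a ξ (ξ * ((L : ℝ) + K - 2) + φ) =
      a * (a * Real.cos (ξ * ((L : ℝ) - 1) + (ξ * ((K : ℝ) - 1) + φ)) -
        Real.cos (ξ * L + (ξ * ((K : ℝ) - 1) + φ))) -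
      (a * Real.cos (ξ * ((L : ℝ) - 1) + (ξ * (K : ℝ) + φ)) -
        Real.cos (ξ * L + (ξ * (K : ℝ) + φ))) := by
    unfold Qf
    rw [show ξ * ((L : ℝ) - 1) + (ξ * ((K : ℝ) - 1) + φ) = ξ * ((L : ℝ) + K - 2) + φ by ring,
      show ξ * (L : ℝ) + (ξ * ((K : ℝ) - 1) + φ) = ξ * ((L : ℝ) + K - 2) + φ + ξ by ring,
      show ξ * ((L : ℝ) - 1) + (ξ * (K : ℝ) + φ) = ξ * ((L : ℝ) + K - 2) + φ + ξ by ring,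
      show ξ * (L : ℝ) + (ξ * (K : ℝ) + φ) = ξ * ((L : ℝ) + K - 2) + φ + 2 * ξ by ring]
    ring
  rw [hQ]
  set Y := cL * (∑ m ∈ Finset.range L, a ^ m * XM a ξ K (ξ * m + φ))
  set X1 := XM a ξ L (ξ * ((K : ℝ) - 1) + φ)
  set X2 := XM a ξ L (ξ * K + φ)
  set g1 := (a * Real.cos (ξ * ((L : ℝ) - 1) + (ξ * ((K : ℝ) - 1) + φ)) -
        Real.cos (ξ * L + (ξ * ((K : ℝ) - 1) + φ)))
  set g2 := (a * Real.cos (ξ * ((L : ℝ) - 1) + (ξ * (K : ℝ) + φ)) -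
        Real.cos (ξ * L + (ξ * (K : ℝ) + φ)))
  set ε := c * (a⁻¹) ^ L
  have e : Y - κ ^ 2 * (a * g1 - g2) = (Y - κ * (a * X1 - X2)) + κ * a * (X1 - κ * g1)
      - κ * (X2 - κ * g2) := by ring
  rw [e]
  have t2 : |κ * a * (X1 - κ * g1)| ≤ κ * a * ε := by
    rw [abs_mul, abs_of_pos (by positivity : 0 < κ * a)]; gcongr
  have t3 : |κ * (X2 - κ * g2)| ≤ κ * ε := by
    rw [abs_mul, abs_of_pos hκp]; gcongr
  have := abs_sub (Y - κ * (a * X1 - X2) + κ * a * (X1 - κ * g1)) (κ * (X2 - κ * g2))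
  have := abs_add_le (Y - κ * (a * X1 - X2)) (κ * a * (X1 - κ * g1))
  have : (a + 1) * (1 + κ) * c * (a⁻¹) ^ L = (a + 1) * ε + κ * a * ε + κ * ε := by
    simp only [ε]; ring
  linarith

/-- The limiting first-order term at position `(L-1-p, K-1-q)`. -/
noncomputable def Tf (a ξ ψ : ℝ) (p q : ℕ) : ℝ :=
  kap a ξ * a⁻¹ * ((a⁻¹) ^ q * (a * Real.cos (ψ - p * ξ) - Real.cos (ψ - p * ξ + ξ))
    + (a⁻¹) ^ p * (a * Real.cos (ψ - q * ξ) - Real.cos (ψ - q * ξ + ξ)))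
  - (a⁻¹) ^ p * (a⁻¹) ^ q * (a⁻¹) ^ 2 * (kap a ξ ^ 2 * Qf a ξ ψ)

theorem pow_split (a : ℝ) (ha : 1 < a) (M i : ℕ) (hi : i < M) :
    a ^ i = (a⁻¹) ^ (M - 1 - i) * a⁻¹ * a ^ M := by
  have h : M = (M - 1 - i) + 1 + i := by omega
  have h0 : a ≠ 0 := by linarith
  conv_rhs => rw [show a ^ M = a ^ ((M - 1 - i) + 1 + i) by rw [← h]]
  rw [pow_add, pow_add, inv_pow]
  field_simp

theorem entry_bound (a ξ φ : ℝ) (ha : 1 < a) : ∃ C : ℝ, 0 < C ∧ ∀ L K : ℕ, 1 ≤ L → L ≤ K →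
    ∀ i k : ℕ, i < L → k < K →
    |(a ^ k / nW a K * ∑ n ∈ Finset.range K, a ^ n * Real.cos (ξ * n + (ξ * i + φ))
      + a ^ i / nW a L * ∑ m ∈ Finset.range L, a ^ m * Real.cos (ξ * m + (ξ * k + φ))
      - a ^ i / nW a L * (a ^ k / nW a K) * ∑ m ∈ Finset.range L, a ^ m *
          ∑ n ∈ Finset.range K, a ^ n * Real.cos (ξ * n + (ξ * m + φ)))
      - Tf a ξ (ξ * ((L : ℝ) + K - 2) + φ) (L - 1 - i) (K - 1 - k)| ≤ C * (a⁻¹) ^ L := by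
  set c := a * (a + 1) ^ 2 / Dn a ξ with hc
  have hcp : 0 < c := by have := Dn_pos a ξ ha; positivity
  have hκp : 0 < kap a ξ := kap_pos a ξ ha
  refine ⟨2 * c + (a + 1) * (1 + kap a ξ) * c, by positivity, ?_⟩
  intro L K hL hLK i k hi hk
  have hK : 1 ≤ K := hL.trans hLK
  have hb1 : a⁻¹ ≤ 1 := inv_le_one_of_one_le₀ ha.le
  have hb0 : 0 < a⁻¹ := by positivity
  have hb : (a⁻¹) ^ K ≤ (a⁻¹) ^ L := pow_le_pow_of_le_one hb0.le hb1 hLK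
  have A1 := lemA a ξ ha K hK (ξ * i + φ)
  have A2 := lemA a ξ ha L hL (ξ * k + φ)
  have A3 := lemB a ξ φ ha L K hL hLK
  rw [← hc] at A1 A2 A3
  have A1' := A1.trans (mul_le_mul_of_nonneg_left hb hcp.le)
  have hp1 : (a⁻¹) ^ (L - 1 - i) ≤ 1 := pow_le_one₀ hb0.le hb1
  have hq1 : (a⁻¹) ^ (K - 1 - k) ≤ 1 := pow_le_one₀ hb0.le hb1
  have hp0 : 0 < (a⁻¹) ^ (L - 1 - i) := by positivity
  have hq0 : 0 < (a⁻¹) ^ (K - 1 - k) := by positivity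
  have ep : ((L - 1 - i : ℕ) : ℝ) = (L : ℝ) - 1 - i := by
    rw [Nat.cast_sub (by omega), Nat.cast_sub hL]; norm_num
  have eq : ((K - 1 - k : ℕ) : ℝ) = (K : ℝ) - 1 - k := by
    rw [Nat.cast_sub (by omega), Nat.cast_sub hK]; norm_num
  unfold Tf
  rw [ep, eq,
    show ξ * ((L : ℝ) + K - 2) + φ - ((L : ℝ) - 1 - i) * ξ + ξ = ξ * K + (ξ * i + φ) by ring,
    show ξ * ((L : ℝ) + K - 2) + φ - ((K : ℝ) - 1 - k) * ξ + ξ = ξ * L + (ξ * k + φ) by ring,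
    show ξ * ((L : ℝ) + K - 2) + φ - ((L : ℝ) - 1 - i) * ξ = ξ * ((K : ℝ) - 1) + (ξ * i + φ) by ring,
    show ξ * ((L : ℝ) + K - 2) + φ - ((K : ℝ) - 1 - k) * ξ = ξ * ((L : ℝ) - 1) + (ξ * k + φ) by ring]
  have hsum : ∑ m ∈ Finset.range L, a ^ m * XM a ξ K (ξ * m + φ) =
      a ^ K / nW a K * ∑ m ∈ Finset.range L, a ^ m *
          ∑ n ∈ Finset.range K, a ^ n * Real.cos (ξ * n + (ξ * m + φ)) := by
    unfold XM
    rw [Finset.mul_sum]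
    refine Finset.sum_congr rfl fun m _ => ?_
    ring
  rw [hsum] at A3
  unfold XM at A1' A2
  rw [pow_split a ha L i hi, pow_split a ha K k hk]
  set S1 := ∑ n ∈ Finset.range K, a ^ n * Real.cos (ξ * n + (ξ * i + φ))
  set S2 := ∑ m ∈ Finset.range L, a ^ m * Real.cos (ξ * m + (ξ * k + φ))
  set S3 := ∑ m ∈ Finset.range L, a ^ m *
          ∑ n ∈ Finset.range K, a ^ n * Real.cos (ξ * n + (ξ * m + φ))
  set x := (a⁻¹) ^ (L - 1 - i)
  set y := (a⁻¹) ^ (K - 1 - k)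
  set h1 := a * Real.cos (ξ * ((K : ℝ) - 1) + (ξ * i + φ)) - Real.cos (ξ * K + (ξ * i + φ))
  set h2 := a * Real.cos (ξ * ((L : ℝ) - 1) + (ξ * k + φ)) - Real.cos (ξ * L + (ξ * k + φ))
  set Q := Qf a ξ (ξ * ((L : ℝ) + K - 2) + φ)
  set κ := kap a ξ
  set b := a⁻¹
  set ε := b ^ L
  have e : (y * b * a ^ K / nW a K * S1 + x * b * a ^ L / nW a L * S2 -
      x * b * a ^ L / nW a L * (y * b * a ^ K / nW a K) * S3) -
      (κ * b * (y * h1 + x * h2) - x * y * b ^ 2 * (κ ^ 2 * Q)) =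
      y * b * (a ^ K / nW a K * S1 - κ * h1) + x * b * (a ^ L / nW a L * S2 - κ * h2)
      - x * y * b ^ 2 * (a ^ L / nW a L * (a ^ K / nW a K * S3) - κ ^ 2 * Q) := by ring
  rw [e]
  have hε : 0 < ε := by positivity
  have t1 : |y * b * (a ^ K / nW a K * S1 - κ * h1)| ≤ c * ε := by
    rw [abs_mul, abs_of_pos (by positivity : 0 < y * b)]
    have : y * b ≤ 1 := by nlinarith
    calc _ ≤ 1 * (c * ε) := mul_le_mul this A1' (abs_nonneg _) zero_le_one
      _ = _ := one_mul _
  have t2 : |x * b * (a ^ L / nW a L * S2 - κ * h2)| ≤ c * ε := by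
    rw [abs_mul, abs_of_pos (by positivity : 0 < x * b)]
    have : x * b ≤ 1 := by nlinarith
    calc _ ≤ 1 * (c * ε) := mul_le_mul this A2 (abs_nonneg _) zero_le_one
      _ = _ := one_mul _
  have t3 : |x * y * b ^ 2 * (a ^ L / nW a L * (a ^ K / nW a K * S3) - κ ^ 2 * Q)| ≤
      (a + 1) * (1 + κ) * c * ε := by
    rw [abs_mul, abs_of_pos (by positivity : 0 < x * y * b ^ 2)]
    have h5 : x * y ≤ 1 := by nlinarith
    have h6 : b ^ 2 ≤ 1 := pow_le_one₀ hb0.le hb1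
    have : x * y * b ^ 2 ≤ 1 := mul_le_one₀ h5 (by positivity) h6
    calc _ ≤ 1 * ((a + 1) * (1 + κ) * c * ε) := mul_le_mul this A3 (abs_nonneg _) zero_le_one
      _ = _ := one_mul _
  refine (abs_sub _ _).trans ?_
  have := abs_add_le (y * b * (a ^ K / nW a K * S1 - κ * h1)) (x * b * (a ^ L / nW a L * S2 - κ * h2))
  linarith

theorem Tf_sum (a ξ ψ : ℝ) (ha : 1 < a) (ℓ : ℕ) :
    (∑ p ∈ Finset.range (ℓ + 1), Tf a ξ ψ p (ℓ - p)) / ((ℓ : ℝ) + 1) =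
      Gfun a ξ * (C1 a ξ ℓ * Real.cos ψ + C2 a ξ ℓ * Real.sin ψ) := by
  have hD := (Dn_pos a ξ ha).ne'
  have ha0 : a ≠ 0 := by linarith
  have hG : Gfun a ξ = kap a ξ * a⁻¹ := by
    unfold Gfun kap
    change (a ^ 2 - 1) / (a * Dn a ξ) = _
    field_simp
  set f : ℕ → ℝ := fun p => (a⁻¹) ^ (ℓ - p) * (a * Real.cos (ψ - p * ξ) - Real.cos (ψ - p * ξ + ξ))
    with hf
  have tel : ∀ n ≤ ℓ + 1, ∑ p ∈ Finset.range n, f p =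
      a ^ n * (a⁻¹) ^ ℓ * Real.cos (ψ - n * ξ + ξ) - (a⁻¹) ^ ℓ * Real.cos (ψ + ξ) := by
    intro n
    induction n with
    | zero => intro _; simp
    | succ n ih =>
      intro hn
      rw [Finset.sum_range_succ, ih (by omega)]
      have : (a⁻¹) ^ (ℓ - n) = a ^ n * (a⁻¹) ^ ℓ := by
        have : (a⁻¹) ^ ℓ = (a⁻¹) ^ (ℓ - n) * (a⁻¹) ^ n := by rw [← pow_add]; congr 1; omega
        rw [this, inv_pow, inv_pow]
        field_simp
      simp only [hf]
      rw [this]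
      push_cast
      rw [show ψ - ((n : ℝ) + 1) * ξ + ξ = ψ - n * ξ by ring]
      ring
  have s1 : ∑ p ∈ Finset.range (ℓ + 1), f p =
      a * Real.cos (ψ - ℓ * ξ) - (a⁻¹) ^ ℓ * Real.cos (ψ + ξ) := by
    rw [tel _ le_rfl]
    push_cast
    rw [show ψ - ((ℓ : ℝ) + 1) * ξ + ξ = ψ - ℓ * ξ by ring, pow_succ, inv_pow]
    field_simp
  have s2 : ∑ p ∈ Finset.range (ℓ + 1), f (ℓ - p) = ∑ p ∈ Finset.range (ℓ + 1), f p := by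
    have := Finset.sum_range_reflect f (ℓ + 1)
    simpa using this
  have e : ∑ p ∈ Finset.range (ℓ + 1), Tf a ξ ψ p (ℓ - p) =
      ∑ p ∈ Finset.range (ℓ + 1), (kap a ξ * a⁻¹ * (f p + f (ℓ - p))
        - (a⁻¹) ^ ℓ * (a⁻¹) ^ 2 * (kap a ξ ^ 2 * Qf a ξ ψ)) := by
    refine Finset.sum_congr rfl fun p hp => ?_
    have hp' : p ≤ ℓ := by have := Finset.mem_range.1 hp; omega
    have e1 : (a⁻¹) ^ ℓ = (a⁻¹) ^ p * (a⁻¹) ^ (ℓ - p) := by rw [← pow_add]; congr 1; omega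
    rw [e1]
    simp only [hf, Tf]
    rw [show ℓ - (ℓ - p) = p by omega]
  rw [e, Finset.sum_sub_distrib, ← Finset.mul_sum, Finset.sum_add_distrib, s2, s1,
    Finset.sum_const, Finset.card_range, nsmul_eq_mul]
  have hz : a ^ (-(ℓ : ℤ)) = (a⁻¹) ^ ℓ := by rw [_root_.zpow_neg, zpow_natCast, inv_pow]
  have hl : (ℓ : ℝ) + 1 ≠ 0 := by positivity
  unfold C1 C2
  rw [hz, hG, Real.cos_sub, Real.cos_add]
  unfold Qf
  rw [Real.cos_add, Real.cos_add, Real.sin_two_mul, Real.cos_two_mul]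
  have hs : Real.sin ξ ^ 2 = 1 - Real.cos ξ ^ 2 := by
    have := Real.sin_sq_add_cos_sq ξ; linarith
  rw [hs]
  have hl2 : 1 + (ℓ : ℝ) ≠ 0 := by positivity
  push_cast
  generalize (a⁻¹) ^ ℓ = bl
  generalize kap a ξ = κ
  rw [div_eq_iff hl, show (1 : ℝ) + ℓ = ℓ + 1 by ring]
  field_simp
  ring

end AnalysisPart

section FinalPart

theorem hank_sum (L K ℓ : ℕ) (hℓ : ℓ < L) (hLK : L ≤ K) (f : ℕ → ℕ → ℝ) :
    (∑ i : Fin L, ∑ k : Fin K, if (i : ℕ) + (k : ℕ) = L + K - 2 - ℓ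
      then f (L - 1 - i) (K - 1 - k) else 0) = ∑ p ∈ Finset.range (ℓ + 1), f p (ℓ - p) := by
  have h1 : (∑ i : Fin L, ∑ k : Fin K, if (i : ℕ) + (k : ℕ) = L + K - 2 - ℓ
      then f (L - 1 - i) (K - 1 - k) else 0) =
      ∑ i ∈ Finset.range L, ∑ k ∈ Finset.range K, if i + k = L + K - 2 - ℓ
      then f (L - 1 - i) (K - 1 - k) else 0 := by
    rw [Finset.sum_range]
    refine Finset.sum_congr rfl fun i _ => ?_
    rw [Finset.sum_range]
  have h2 : (∑ i ∈ Finset.range L, ∑ k ∈ Finset.range K, if i + k = L + K - 2 - ℓ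
      then f (L - 1 - i) (K - 1 - k) else 0) =
      ∑ p ∈ Finset.range L, ∑ q ∈ Finset.range K, if p + q = ℓ then f p q else 0 := by
    rw [← Finset.sum_range_reflect _ L]
    refine Finset.sum_congr rfl fun p hp => ?_
    rw [← Finset.sum_range_reflect _ K]
    refine Finset.sum_congr rfl fun q hq => ?_
    have hp' := Finset.mem_range.1 hp
    have hq' := Finset.mem_range.1 hq
    have e1 : L - 1 - (L - 1 - p) = p := by omega
    have e2 : K - 1 - (K - 1 - q) = q := by omega
    have e3 : (L - 1 - p + (K - 1 - q) = L + K - 2 - ℓ) ↔ p + q = ℓ := by omega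
    rw [e1, e2]
    simp only [e3]
  have h3 : (∑ p ∈ Finset.range L, ∑ q ∈ Finset.range K, if p + q = ℓ then f p q else 0) =
      ∑ p ∈ Finset.range L, if p < ℓ + 1 then f p (ℓ - p) else 0 := by
    refine Finset.sum_congr rfl fun p _ => ?_
    split_ifs with h
    · rw [Finset.sum_eq_single (ℓ - p)]
      · rw [if_pos (by omega)]
      · intro q _ hq
        rw [if_neg (by omega)]
      · intro hq
        exact absurd (Finset.mem_range.2 (by omega)) hq
    · refine Finset.sum_eq_zero fun q _ => ?_
      rw [if_neg (by omega)]
  rw [h1, h2, h3, ← Finset.sum_filter]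
  refine Finset.sum_congr ?_ fun _ _ => rfl
  ext p
  simp only [Finset.mem_filter, Finset.mem_range]
  omega

theorem hank_den (L K ℓ : ℕ) (hℓ : ℓ < L) (hLK : L ≤ K) :
    (∑ i : Fin L, ∑ k : Fin K, if (i : ℕ) + (k : ℕ) = L + K - 2 - ℓ then (1 : ℝ) else 0)
      = (ℓ : ℝ) + 1 := by
  rw [hank_sum L K ℓ hℓ hLK (fun _ _ => 1)]
  simp

theorem hank_close {L K : ℕ} (Y Z : Matrix (Fin L) (Fin K) ℝ) (j : ℕ) (ε : ℝ) (hε : 0 ≤ ε)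
    (h : ∀ i k, |Y i k - Z i k| ≤ ε) : |hankelize Y j - hankelize Z j| ≤ ε := by
  unfold hankelize
  rw [← sub_div, abs_div, ← Finset.sum_sub_distrib]
  simp only [← Finset.sum_sub_distrib]
  set d := (∑ i : Fin L, ∑ k : Fin K, if (i : ℕ) + (k : ℕ) = j then (1 : ℝ) else 0) with hd
  have hd0 : 0 ≤ d := Finset.sum_nonneg fun i _ => Finset.sum_nonneg fun k _ => by
    split_ifs <;> norm_num
  rw [abs_of_nonneg hd0]
  refine div_le_of_le_mul₀ hd0 hε ?_
  rw [hd, Finset.mul_sum]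
  refine (Finset.abs_sum_le_sum_abs _ _).trans (Finset.sum_le_sum fun i _ => ?_)
  rw [Finset.mul_sum]
  refine (Finset.abs_sum_le_sum_abs _ _).trans (Finset.sum_le_sum fun k _ => ?_)
  split_ifs
  · rw [mul_one]; exact h i k
  · simp

theorem core_bound (a ξ φ : ℝ) (ha : 1 < a) : ∃ C : ℝ, 0 < C ∧ ∀ (L K ℓ : ℕ) (δ : ℝ),
    ℓ < L → L ≤ K → 4 * (|δ| * (L + K)) ≤ a ^ (L + K - 2) → ∀ u : Fin L → ℝ,
    IsTopEigenvector (HdeltaSq a ξ φ δ L K) u →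
    |recErr a ξ φ δ L K u (L + K - 2 - ℓ) - δ * (Gfun a ξ *
      (C1 a ξ ℓ * Real.cos (ξ * ((L : ℝ) + K - 2) + φ) +
        C2 a ξ ℓ * Real.sin (ξ * ((L : ℝ) + K - 2) + φ)))| ≤
      100 * (|δ| * (L + K)) ^ 2 / a ^ (L + K - 2) + |δ| * (C * (a⁻¹) ^ L) := by
  obtain ⟨C, hC, hent⟩ := entry_bound a ξ φ ha
  refine ⟨C, hC, ?_⟩
  intro L K ℓ δ hℓ hLK hbig u hu
  have hL : 1 ≤ L := by omega
  have hK : 1 ≤ K := by omega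
  have ha0 : 0 < a := by linarith
  have hnL := nW_pos a ha L hL
  have hnK := nW_pos a ha K hK
  set ψ := ξ * ((L : ℝ) + K - 2) + φ with hψ
  set rL := Real.sqrt (nW a L) with hrL
  set rK := Real.sqrt (nW a K) with hrK
  have hrL2 : rL * rL = nW a L := Real.mul_self_sqrt hnL.le
  have hrK2 : rK * rK = nW a K := Real.mul_self_sqrt hnK.le
  have hrLp : 0 < rL := Real.sqrt_pos.2 hnL
  have hrKp : 0 < rK := Real.sqrt_pos.2 hnK
  have hge : ∀ M : ℕ, 1 ≤ M → a ^ (M - 1) ≤ Real.sqrt (nW a M) := by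
    intro M hM
    apply Real.le_sqrt_of_sq_le
    unfold nW
    exact Finset.single_le_sum (f := fun m => (a ^ m) ^ 2) (fun i _ => sq_nonneg _)
      (Finset.mem_range.2 (by omega : M - 1 < M))
  set s := rL * rK with hs
  have hsp : 0 < s := by positivity
  have hsge : a ^ (L + K - 2) ≤ s := by
    have : a ^ (L + K - 2) = a ^ (L - 1) * a ^ (K - 1) := by rw [← pow_add]; congr 1; omega
    rw [this]
    exact mul_le_mul (hge L hL) (hge K hK) (by positivity) hrLp.le
  set B := |δ| * ((L : ℝ) + K) with hB
  have hBp : 0 ≤ B := by positivity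
  set w : Fin L → ℝ := fun i => a ^ (i : ℕ) / rL with hw
  set z : Fin K → ℝ := fun k => a ^ (k : ℕ) / rK with hz
  set Fm : Matrix (Fin L) (Fin K) ℝ := δ • hankelOf (cosNoise ξ φ) L K with hFm
  have hFe : ∀ i k, Fm i k = δ * Real.cos (ξ * (((i : ℕ) : ℝ) + ((k : ℕ) : ℝ)) + φ) := by
    intro i k
    simp [hFm, hankelOf, cosNoise]
  have unit : ∀ (M : ℕ) (r : ℝ), 0 < r → r * r = nW a M →
      (fun i : Fin M => a ^ (i : ℕ) / r) ⬝ᵥ (fun i : Fin M => a ^ (i : ℕ) / r) = 1 := by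
    intro M r hr hr2
    have : (fun i : Fin M => a ^ (i : ℕ) / r) ⬝ᵥ (fun i : Fin M => a ^ (i : ℕ) / r) =
        (∑ i : Fin M, (a ^ (i : ℕ)) ^ 2) / (r * r) := by
      rw [dotProduct, Finset.sum_div]
      refine Finset.sum_congr rfl fun i _ => ?_
      field_simp
    rw [this, hr2]
    unfold nW
    rw [← Finset.sum_range (fun i => (a ^ i) ^ 2)]
    exact div_self (nW_pos a ha M (by
      by_contra h
      have : M = 0 := by omega
      subst this
      simp [nW] at hr2
      exact hr.ne' hr2)).ne'
  have hfro : ∑ i, ∑ k, Fm i k ^ 2 ≤ B ^ 2 := by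
    calc ∑ i, ∑ k, Fm i k ^ 2 ≤ ∑ i : Fin L, ∑ k : Fin K, δ ^ 2 := by
          refine Finset.sum_le_sum fun i _ => Finset.sum_le_sum fun k _ => ?_
          rw [hFe, mul_pow]
          have := Real.cos_sq_le_one (ξ * (((i : ℕ) : ℝ) + ((k : ℕ) : ℝ)) + φ)
          nlinarith [sq_nonneg δ]
      _ = L * (K * δ ^ 2) := by simp
      _ ≤ B ^ 2 := by
          rw [hB, mul_pow, sq_abs]
          have h1 : (0 : ℝ) ≤ L := Nat.cast_nonneg _
          have h2 : (0 : ℝ) ≤ K := Nat.cast_nonneg _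
          have : (L : ℝ) * K ≤ (L + K) ^ 2 := by nlinarith
          nlinarith [sq_nonneg δ]
  have hMeq : hankelOf (expSignal a) L K + δ • hankelOf (cosNoise ξ φ) L K =
      s • Matrix.vecMulVec w z + Fm := by
    congr 1
    ext i k
    simp only [hankelOf, expSignal, Matrix.of_apply, Matrix.smul_apply, Matrix.vecMulVec_apply,
      smul_eq_mul, hw, hz, hs]
    rw [pow_add]
    field_simp
  have hmp := mat_pert w z (unit L rL hrLp hrL2) (unit K rK hrKp hrK2) Fm B s hBp hsp
    (hbig.trans hsge) hfro (hankelOf (expSignal a) L K + δ • hankelOf (cosNoise ξ φ) L K)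
    hMeq u hu
  -- explicit forms
  have g1 : ∀ (i : Fin L) (k : Fin K), (Fm *ᵥ z) i * z k =
      δ * (a ^ (k : ℕ) / nW a K * ∑ n ∈ Finset.range K,
        a ^ n * Real.cos (ξ * n + (ξ * ((i : ℕ) : ℝ) + φ))) := by
    intro i k
    rw [Finset.sum_range, Matrix.mulVec, dotProduct, Finset.sum_mul, Finset.mul_sum,
      Finset.mul_sum]
    refine Finset.sum_congr rfl fun n _ => ?_
    rw [hFe, ← hrK2, show ξ * (((i : ℕ) : ℝ) + ((n : ℕ) : ℝ)) + φ =
      ξ * ((n : ℕ) : ℝ) + (ξ * ((i : ℕ) : ℝ) + φ) by ring]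
    simp only [hz]
    field_simp
  have g2 : ∀ (i : Fin L) (k : Fin K), w i * (Fmᵀ *ᵥ w) k =
      δ * (a ^ (i : ℕ) / nW a L * ∑ m ∈ Finset.range L,
        a ^ m * Real.cos (ξ * m + (ξ * ((k : ℕ) : ℝ) + φ))) := by
    intro i k
    rw [Finset.sum_range, Matrix.mulVec, dotProduct, Finset.mul_sum, Finset.mul_sum,
      Finset.mul_sum]
    refine Finset.sum_congr rfl fun n _ => ?_
    rw [Matrix.transpose_apply, hFe, ← hrL2, show ξ * (((n : ℕ) : ℝ) + ((k : ℕ) : ℝ)) + φ =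
      ξ * ((n : ℕ) : ℝ) + (ξ * ((k : ℕ) : ℝ) + φ) by ring]
    simp only [hw]
    field_simp
  have g3 : ∀ (i : Fin L) (k : Fin K), (w ⬝ᵥ (Fm *ᵥ z)) * w i * z k =
      δ * (a ^ (i : ℕ) / nW a L * (a ^ (k : ℕ) / nW a K) * ∑ m ∈ Finset.range L, a ^ m *
          ∑ n ∈ Finset.range K, a ^ n * Real.cos (ξ * n + (ξ * m + φ))) := by
    intro i k
    have : (w ⬝ᵥ (Fm *ᵥ z)) * w i * z k = ∑ m, w m * w i * ((Fm *ᵥ z) m * z k) := by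
      rw [dotProduct, Finset.sum_mul, Finset.sum_mul]
      refine Finset.sum_congr rfl fun n _ => ?_
      ring
    rw [this, Finset.sum_range (n := L), Finset.mul_sum, Finset.mul_sum]
    refine Finset.sum_congr rfl fun n _ => ?_
    rw [g1, ← hrL2]
    simp only [hw]
    field_simp
  set Z : Matrix (Fin L) (Fin K) ℝ := Matrix.of fun i k =>
    a ^ (L + K - 2 - (L - 1 - (i : ℕ)) - (K - 1 - (k : ℕ))) + δ * Tf a ξ ψ (L - 1 - i) (K - 1 - k)
    with hZ
  have hε0 : 0 ≤ 100 * B ^ 2 / s + |δ| * (C * (a⁻¹) ^ L) := by positivity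
  have hclose := hank_close (Matrix.vecMulVec u u *
    (hankelOf (expSignal a) L K + δ • hankelOf (cosNoise ξ φ) L K)) Z (L + K - 2 - ℓ)
    (100 * B ^ 2 / s + |δ| * (C * (a⁻¹) ^ L)) hε0 (by
      intro i k
      have m1 := hmp i k
      rw [g1, g2, g3] at m1
      have m2 := hent L K hL hLK i k i.2 k.2
      rw [← hψ] at m2
      have m3 : s * w i * z k = a ^ (L + K - 2 - (L - 1 - (i : ℕ)) - (K - 1 - (k : ℕ))) := by
        have hi := i.2
        have hk := k.2
        rw [show L + K - 2 - (L - 1 - (i : ℕ)) - (K - 1 - (k : ℕ)) = (i : ℕ) + k by omega, pow_add]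
        simp only [hw, hz, hs]
        field_simp
      have m4 := mul_le_mul_of_nonneg_left m2 (abs_nonneg δ)
      rw [← abs_mul] at m4
      rw [m3] at m1
      refine le_trans (le_of_eq ?_) ((abs_add_le _ _).trans (add_le_add m1 m4))
      simp only [hZ, Matrix.of_apply]
      congr 1
      ring)
  have hZval : hankelize Z (L + K - 2 - ℓ) = a ^ (L + K - 2 - ℓ) + δ * (Gfun a ξ *
      (C1 a ξ ℓ * Real.cos ψ + C2 a ξ ℓ * Real.sin ψ)) := by
    unfold hankelize
    rw [hank_den L K ℓ hℓ hLK, ← Tf_sum a ξ ψ ha ℓ]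
    simp only [hZ, Matrix.of_apply]
    rw [hank_sum L K ℓ hℓ hLK (fun p q => a ^ (L + K - 2 - p - q) + δ * Tf a ξ ψ p q)]
    have : ∀ p ∈ Finset.range (ℓ + 1), a ^ (L + K - 2 - p - (ℓ - p)) + δ * Tf a ξ ψ p (ℓ - p) =
        a ^ (L + K - 2 - ℓ) + δ * Tf a ξ ψ p (ℓ - p) := by
      intro p hp
      have := Finset.mem_range.1 hp
      rw [show L + K - 2 - p - (ℓ - p) = L + K - 2 - ℓ by omega]
    rw [Finset.sum_congr rfl this, Finset.sum_add_distrib, ← Finset.mul_sum, Finset.sum_const,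
      Finset.card_range, nsmul_eq_mul]
    have : (ℓ : ℝ) + 1 ≠ 0 := by positivity
    push_cast
    field_simp
  rw [hZval] at hclose
  unfold recErr
  rw [sub_sub]
  refine hclose.trans (add_le_add_left ?_ _)
  exact div_le_div_of_nonneg_left (by positivity) (by positivity) hsge

end FinalPart

/-- the asymptotic form of the last reconstruction errors
`r_{N-1-ℓ}(N)`, with remainder `O(a^{-L(N)})`. -/
theorem stmt_3 (a ξ φ α : ℝ) (ha : 1 < a) (hξ : ξ ∈ Set.Ioo 0 Real.pi)
    (hφ : φ ∈ Set.Ico 0 (2 * Real.pi)) (hα : α ∈ Set.Ioo (0 : ℝ) 1)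
    (L K : ℕ → ℕ)
    (hLK : ∀ N, 3 ≤ N → 1 < L N ∧ L N ≤ K N ∧ L N + K N = N + 1)
    (hlim : Tendsto (fun N : ℕ => (L N : ℝ) / (N : ℝ)) atTop (nhds α))
    (ℓ : ℕ) (δ : ℝ) :
    ∃ C > (0 : ℝ), ∃ N₀ : ℕ, ∀ N, N₀ ≤ N →
      ∀ u : Fin (L N) → ℝ, IsTopEigenvector (HdeltaSq a ξ φ δ (L N) (K N)) u →
        |recErr a ξ φ δ (L N) (K N) u (N - 1 - ℓ) -
          δ * Gfun a ξ * (C1 a ξ ℓ * Real.cos (((N : ℝ) - 1) * ξ + φ) +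
            C2 a ξ ℓ * Real.sin (((N : ℝ) - 1) * ξ + φ))| ≤
          C * a ^ (-(L N : ℝ)) := by
  have ha0 : 0 < a := by linarith
  obtain ⟨C, hC, hcore⟩ := core_bound a ξ φ ha
  have hb0 : 0 < a⁻¹ := by positivity
  have hb1 : a⁻¹ < 1 := inv_lt_one_of_one_lt₀ ha
  -- polynomial times geometric
  have t1 := tendsto_pow_const_mul_const_pow_of_abs_lt_one 1 (r := a⁻¹)
    (by rwa [abs_of_pos hb0])
  have t2 := tendsto_pow_const_mul_const_pow_of_abs_lt_one 2 (r := a⁻¹)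
    (by rwa [abs_of_pos hb0])
  obtain ⟨P, hP⟩ := t2.bddAbove_range
  have hP' : ∀ n : ℕ, (n : ℝ) ^ 2 * a⁻¹ ^ n ≤ P := fun n => hP ⟨n, rfl⟩
  have hP0 : 0 ≤ P := by simpa using hP' 0
  have ev1 : ∀ᶠ n : ℕ in atTop, (n : ℝ) ^ 1 * a⁻¹ ^ n < 1 / (a * (8 * |δ| + 1)) :=
    t1.eventually (gt_mem_nhds (by positivity))
  have ev2 : ∀ᶠ N : ℕ in atTop, α / 2 < (L N : ℝ) / N :=
    hlim.eventually (lt_mem_nhds (by linarith [hα.1]))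
  have ev3 : ∀ᶠ N : ℕ in atTop, (ℓ : ℝ) / (α / 2) < N :=
    tendsto_natCast_atTop_atTop.eventually (eventually_gt_atTop _)
  obtain ⟨N₀, hN₀⟩ := eventually_atTop.1 ((ev1.and (ev2.and ev3)).and (eventually_ge_atTop 3))
  refine ⟨100 * (|δ| * 4) ^ 2 * a ^ 2 * P + |δ| * C + 1, by positivity, N₀, ?_⟩
  intro N hN u hu
  obtain ⟨⟨h1, h2, h3⟩, hN3⟩ := hN₀ N hN
  obtain ⟨hL1, hLK', hsum⟩ := hLK N hN3
  have hsumR : (L N : ℝ) + K N = N + 1 := by exact_mod_cast hsum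
  have hNpos : (0 : ℝ) < N := by positivity
  have hN3R : (3 : ℝ) ≤ N := by exact_mod_cast hN3
  have hℓ : ℓ < L N := by
    have hα2 : 0 < α / 2 := by linarith [hα.1]
    rw [div_lt_iff₀ hα2] at h3
    rw [lt_div_iff₀ hNpos] at h2
    have : (ℓ : ℝ) < L N := by linarith
    exact_mod_cast this
  have hpow : a ^ (N - 1) * a = a ^ N := by rw [← pow_succ]; congr 1; omega
  have hbig : 4 * (|δ| * ((L N : ℝ) + K N)) ≤ a ^ (L N + K N - 2) := by
    rw [hsumR, show L N + K N - 2 = N - 1 by omega]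
    rw [pow_one, inv_pow, ← div_eq_mul_inv, div_lt_div_iff₀ (by positivity) (by positivity),
      one_mul, ← hpow] at h1
    have h4 : (N : ℝ) * (8 * |δ| + 1) < a ^ (N - 1) := by
      have : a * ((N : ℝ) * (8 * |δ| + 1)) < a * a ^ (N - 1) := by linarith
      exact lt_of_mul_lt_mul_left this ha0.le
    have := abs_nonneg δ
    nlinarith
  have hc := hcore (L N) (K N) ℓ δ hℓ hLK' hbig u hu
  have hψ : ξ * ((L N : ℝ) + K N - 2) + φ = ((N : ℝ) - 1) * ξ + φ := by rw [hsumR]; ring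
  rw [hψ, show L N + K N - 2 = N - 1 by omega, hsumR, ← mul_assoc] at hc
  have hrp : a ^ (-(L N : ℝ)) = a⁻¹ ^ (L N) := by
    rw [Real.rpow_neg ha0.le, Real.rpow_natCast, inv_pow]
  rw [hrp]
  refine hc.trans ?_
  have hKR : (N : ℝ) + 1 ≤ 2 * K N := by
    have : (L N : ℝ) ≤ K N := by exact_mod_cast hLK'
    linarith
  have hpos : 0 < a⁻¹ ^ (L N) := by positivity
  have hfirst : 100 * (|δ| * ((N : ℝ) + 1)) ^ 2 / a ^ (N - 1) ≤
      100 * (|δ| * 4) ^ 2 * a ^ 2 * P * a⁻¹ ^ (L N) := by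
    have e1 : (a ^ (N - 1))⁻¹ = a ^ 2 * (a⁻¹ ^ (K N) * a⁻¹ ^ (L N)) := by
      have : a ^ (K N) * a ^ (L N) = a ^ 2 * a ^ (N - 1) := by
        rw [← pow_add, ← pow_add]; congr 1; omega
      rw [inv_pow, inv_pow, ← _root_.mul_inv, this]
      field_simp
    rw [div_eq_mul_inv, e1]
    have e2 : 100 * (|δ| * ((N : ℝ) + 1)) ^ 2 ≤ 100 * (|δ| * 4) ^ 2 * (K N : ℝ) ^ 2 := by
      have : |δ| * ((N : ℝ) + 1) ≤ |δ| * 4 * K N := by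
        rw [mul_assoc]
        apply mul_le_mul_of_nonneg_left _ (abs_nonneg δ)
        linarith
      have := pow_le_pow_left₀ (by positivity) this 2
      nlinarith
    calc 100 * (|δ| * ((N : ℝ) + 1)) ^ 2 * (a ^ 2 * (a⁻¹ ^ (K N) * a⁻¹ ^ (L N)))
        ≤ 100 * (|δ| * 4) ^ 2 * (K N : ℝ) ^ 2 * (a ^ 2 * (a⁻¹ ^ (K N) * a⁻¹ ^ (L N))) := by
          apply mul_le_mul_of_nonneg_right e2 (by positivity)
      _ = 100 * (|δ| * 4) ^ 2 * a ^ 2 * ((K N : ℝ) ^ 2 * a⁻¹ ^ (K N)) * a⁻¹ ^ (L N) := by ring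
      _ ≤ _ := by
          apply mul_le_mul_of_nonneg_right _ hpos.le
          exact mul_le_mul_of_nonneg_left (hP' _) (by positivity)
  nlinarith
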